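/- Let l ≥ 1, let k_1, …, k_l be positive integers with k = Σ k_i, and let d_1, …, d_l be positive integers. Partition the variables w_1, …, w_k into l consecutive blocks, block i of size k_i. Let θ_1, …, θ_r be real polynomials in w_1, …, w_k such that every monomial of every θ_j has total degree at most d_i in the variables of block i, for each i. If y ∈ ℝ^r is a regular value of the map f = (θ_1, …, θ_r) : ℝ^k → ℝ^r, then f⁻¹(y) has at most 2^k · k! · ∏_{i=1}^l d_i^{k_i}/k_i! connected components. -/

import Mathlib

/-!
The polynomial `g = ∑ j, (θ j - y j) ^ 2` is nonnegative with zero set `f ⁻¹' {y}`, and its degree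
in the block `i` is at most `2 * d i`. If the zero set maps continuously onto `Fin N`, its `N`
clopen pieces are separated by compact sets, and `g + ε * ∑ a, z a ^ 2` has a local minimum near
each piece for small `ε > 0`. These minima survive a further small linear perturbation, which by
Sard's theorem can be chosen so that the gradient `p` is a local diffeomorphism at each of its
zeros; the block degrees of `p` are still at most `2 * d i`.

It remains to bound the number of zeros `x j` of `p` at which `p` is locally onto. Choose
polynomials `e j` with `e j = 1` at `x j` and `e j = 0` at the other zeros. The products
`e j * ∏ a, p a ^ α a` are linearly independent, because a relation would have a lowest-order form
in the `p a`, and near `x j` these take values in every direction. Those with `|α| ≤ t` lie in the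
space of polynomials of degree at most `2 * d i * t + s` in the block `i`; comparing the number of
products with the dimension of that space as `t → ∞` gives the bound.
-/

namespace Rojas

open Filter Function MvPolynomial Set Topology
open scoped Nat

section Counting

theorem card_sum_le (σ : Type*) [Fintype σ] (n : ℕ) :
    Nat.card {v : σ → ℕ // ∑ a, v a ≤ n} =
      (n + Fintype.card σ).choose (Fintype.card σ) := by
  classical
  let slack : {v : σ → ℕ // ∑ a, v a ≤ n} ≃ {w : Option σ → ℕ // ∑ a, w a = n} :=
    { toFun v := ⟨fun o ↦ o.elim (n - ∑ a, v.1 a) v.1, by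
        simpa [Fintype.sum_option] using Nat.sub_add_cancel v.2⟩
      invFun w := ⟨fun a ↦ w.1 (some a), by
        have := w.2
        rw [Fintype.sum_option] at this
        exact (Nat.le_add_left _ _).trans this.le⟩
      left_inv v := by ext; simp
      right_inv w := by
        have := w.2
        rw [Fintype.sum_option] at this
        ext o
        cases o with
        | none => exact (Nat.eq_sub_of_add_eq this).symm
        | some a => rfl }
  rw [Nat.card_congr (slack.trans (Sym.equivNatSumOfFintype (Option σ) n).symm),
    Nat.card_eq_fintype_card, Sym.card_sym_eq_choose, Fintype.card_option, add_right_comm,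
    add_tsub_cancel_right, add_comm, Nat.choose_symm_add]

theorem tendsto_choose_div_pow (a b k : ℕ) :
    Tendsto (fun t : ℕ ↦ ((a * t + b + k).choose k : ℝ) / t ^ k) atTop (𝓝 (a ^ k / k !)) := by
  have hfactor (j : ℕ) : Tendsto (fun t : ℕ ↦ ((a * t + b + 1 + j : ℕ) : ℝ) / t) atTop (𝓝 a) := by
    have hlim : Tendsto (fun t : ℕ ↦ (a : ℝ) + (b + 1 + j : ℕ) / (t : ℝ)) atTop (𝓝 a) := by
      simpa using (tendsto_const_nhds (x := (a : ℝ))).add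
        (tendsto_const_div_atTop_nhds_zero_nat ((b + 1 + j : ℕ) : ℝ))
    refine hlim.congr' ?_
    filter_upwards [eventually_ne_atTop 0] with t ht
    push_cast
    field_simp
    ring
  have hprod := (tendsto_finsetProd (Finset.range k) fun j _ ↦ hfactor j).div_const (k ! : ℝ)
  rw [Finset.prod_const, Finset.card_range] at hprod
  refine hprod.congr fun t ↦ ?_
  have hchoose := Nat.ascFactorial_eq_factorial_mul_choose (a * t + b) k
  rw [Nat.ascFactorial_eq_prod_range] at hchoose
  rw [Finset.prod_div_distrib, Finset.prod_const, Finset.card_range, ← Nat.cast_prod, hchoose,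
    Nat.cast_mul, mul_div_assoc, mul_div_cancel_left₀ _ (by positivity)]

end Counting

section BlockDegree

variable {ι : Type*} {κ : ι → Type*} [∀ i, Fintype (κ i)] {R : Type*} [CommSemiring R]

/-- The exponents of the monomials, in variables indexed by `Σ i, κ i`, that have total degree at
most `D i` in the variables of the block `κ i`, for every `i`. -/
def blockExponents (D : ι → ℕ) : Set ((Σ i, κ i) →₀ ℕ) :=
  {m | ∀ i, ∑ t, m ⟨i, t⟩ ≤ D i}

theorem card_blockExponents [Fintype ι] (D : ι → ℕ) :
    Nat.card (blockExponents (κ := κ) D) =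
      ∏ i, (D i + Fintype.card (κ i)).choose (Fintype.card (κ i)) := by
  let blocks : ((Σ i, κ i) →₀ ℕ) ≃ ∀ i, κ i → ℕ :=
    Finsupp.equivFunOnFinite.trans (Equiv.piCurry fun _ _ ↦ ℕ)
  let split : blockExponents (κ := κ) D ≃ ∀ i, {v : κ i → ℕ // ∑ t, v t ≤ D i} :=
    (blocks.subtypeEquiv fun _ ↦ Iff.rfl).trans
      (Equiv.subtypePiEquivPi (p := fun i (v : κ i → ℕ) ↦ ∑ t, v t ≤ D i))
  rw [Nat.card_congr split, Nat.card_pi]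
  exact Finset.prod_congr rfl fun i _ ↦ card_sum_le (κ i) (D i)

instance [Finite ι] (D : ι → ℕ) : Finite (blockExponents (κ := κ) D) := by
  cases nonempty_fintype ι
  refine Nat.finite_of_card_ne_zero ((card_blockExponents D).trans_ne ?_)
  exact Finset.prod_ne_zero_iff.2 fun i _ ↦ (Nat.choose_pos (Nat.le_add_left _ _)).ne'

/-- The polynomials all of whose monomials have total degree at most `D i` in the variables of
the block `κ i`, for every `i`. -/
noncomputable def blockDegreeLE (R : Type*) [CommSemiring R] (D : ι → ℕ) :
    Submodule R (MvPolynomial (Σ i, κ i) R) :=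
  restrictSupport R (blockExponents D)

instance [Finite ι] (D : ι → ℕ) : Module.Finite R (blockDegreeLE (κ := κ) R D) :=
  .of_basis (basisRestrictSupport R (blockExponents D))

theorem finrank_blockDegreeLE [StrongRankCondition R] [Fintype ι] (D : ι → ℕ) :
    Module.finrank R (blockDegreeLE (κ := κ) R D) =
      ∏ i, (D i + Fintype.card (κ i)).choose (Fintype.card (κ i)) :=
  (Module.finrank_eq_nat_card_basis (basisRestrictSupport R _)).trans (card_blockExponents D)

theorem mem_blockDegreeLE {D : ι → ℕ} {p : MvPolynomial (Σ i, κ i) R} :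
    p ∈ blockDegreeLE R D ↔ ∀ m ∈ p.support, ∀ i, ∑ t, m ⟨i, t⟩ ≤ D i :=
  Iff.rfl

theorem blockDegreeLE_mono {D D' : ι → ℕ} (h : D ≤ D') :
    blockDegreeLE (κ := κ) R D ≤ blockDegreeLE R D' :=
  restrictSupport_mono R fun _ hm i ↦ (hm i).trans (h i)

theorem C_mem_blockDegreeLE (D : ι → ℕ) (c : R) :
    C c ∈ blockDegreeLE (κ := κ) R D :=
  (monomial_mem_restrictSupport R).2 (.inl fun i ↦ by simp)

theorem one_mem_blockDegreeLE (D : ι → ℕ) : 1 ∈ blockDegreeLE (κ := κ) R D := by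
  rw [← C_1]
  exact C_mem_blockDegreeLE D 1

theorem mul_mem_blockDegreeLE {D D' : ι → ℕ} {p q : MvPolynomial (Σ i, κ i) R}
    (hp : p ∈ blockDegreeLE R D) (hq : q ∈ blockDegreeLE R D') :
    p * q ∈ blockDegreeLE R (D + D') := by
  have hpq := Submodule.mul_mem_mul hp hq
  rw [blockDegreeLE, blockDegreeLE, ← restrictSupport_add] at hpq
  refine restrictSupport_mono R ?_ hpq
  rintro _ ⟨m, hm, n, hn, rfl⟩ i
  simpa [Finset.sum_add_distrib] using add_le_add (hm i) (hn i)

theorem pow_mem_blockDegreeLE {D : ι → ℕ} {p : MvPolynomial (Σ i, κ i) R}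
    (hp : p ∈ blockDegreeLE R D) (n : ℕ) : p ^ n ∈ blockDegreeLE R (n • D) := by
  induction n with
  | zero => rw [pow_zero]; exact one_mem_blockDegreeLE _
  | succ n ih => rw [pow_succ, succ_nsmul]; exact mul_mem_blockDegreeLE ih hp

theorem prod_pow_mem_blockDegreeLE {τ : Type*} {D : ι → ℕ} {p : τ → MvPolynomial (Σ i, κ i) R}
    (hp : ∀ a, p a ∈ blockDegreeLE R D) (α : τ →₀ ℕ) :
    α.prod (fun a n ↦ p a ^ n) ∈ blockDegreeLE R (α.degree • D) := by
  induction α using Finsupp.induction_linear with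
  | zero => rw [Finsupp.prod_zero_index]; exact one_mem_blockDegreeLE _
  | add α β hα hβ =>
    rw [Finsupp.prod_add_index' (by simp) (by simp [pow_add]), map_add, add_nsmul]
    exact mul_mem_blockDegreeLE hα hβ
  | single a n => simpa using pow_mem_blockDegreeLE (hp a) n

theorem pderiv_mem_blockDegreeLE {D : ι → ℕ} {p : MvPolynomial (Σ i, κ i) R}
    (hp : p ∈ blockDegreeLE R D) (a : Σ i, κ i) : pderiv a p ∈ blockDegreeLE R D := by
  rw [mem_blockDegreeLE] at *
  intro m hm i
  have hm' : m + Finsupp.single a 1 ∈ p.support := by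
    rw [mem_support_iff, coeff_pderiv] at hm
    exact mem_support_iff.2 (left_ne_zero_of_mul hm)
  exact (Finset.sum_le_sum fun t _ ↦ by simp).trans (hp _ hm' i)

theorem mem_blockDegreeLE_of_totalDegree_le [Finite ι] {D : ι → ℕ}
    {p : MvPolynomial (Σ i, κ i) R} (h : ∀ i, p.totalDegree ≤ D i) : p ∈ blockDegreeLE R D := by
  cases nonempty_fintype ι
  intro m hm i
  calc ∑ t, m ⟨i, t⟩ ≤ ∑ i, ∑ t, m ⟨i, t⟩ :=
        Finset.single_le_sum (f := fun i ↦ ∑ t, m ⟨i, t⟩) (by simp) (Finset.mem_univ i)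
    _ = m.sum fun _ e ↦ e := by rw [Finsupp.sum_fintype _ _ (by simp), Fintype.sum_sigma]
    _ ≤ D i := (le_totalDegree hm).trans (h i)

end BlockDegree

section Multiplicity

variable {σ τ J : Type*}

/-- The map `(σ → R) → (τ → R)` with polynomial components `p a`. -/
noncomputable def evalMap {R : Type*} [CommSemiring R] (p : τ → MvPolynomial σ R) (z : σ → R) :
    τ → R :=
  fun a ↦ eval z (p a)

theorem mem_closure_setOf_eq_smul {X E : Type*} [TopologicalSpace X] [AddCommGroup E]
    [Module ℝ E] [TopologicalSpace E] [ContinuousSMul ℝ E] {F : X → E} {x : X}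
    (hF : 𝓝 0 ≤ map F (𝓝 x)) (v : E) :
    (x, (0 : ℝ)) ∈ closure {zs : X × ℝ | zs.2 ≠ 0 ∧ F zs.1 = zs.2 • v} := by
  rw [mem_closure_iff_nhds_basis ((𝓝 x).basis_sets.prod_nhds (𝓝 (0 : ℝ)).basis_sets)]
  rintro ⟨U, V⟩ ⟨hU, hV⟩
  have hray : Tendsto (fun s : ℝ ↦ s • v) (𝓝[≠] 0) (𝓝 0) := by
    have : Continuous fun s : ℝ ↦ s • v := by fun_prop
    simpa using (this.tendsto 0).mono_left nhdsWithin_le_nhds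
  obtain ⟨s, ⟨⟨z, hzU, hz⟩, hsV⟩, hs⟩ :=
    ((hray.eventually (hF (image_mem_map hU))).and (mem_nhdsWithin_of_mem_nhds hV)).and
      self_mem_nhdsWithin |>.exists
  exact ⟨(z, s), ⟨hs, hz⟩, hzU, hsV⟩

theorem eval_coeff_eq_zero_of_eval_eq_zero {p : τ → MvPolynomial σ ℝ} {x : σ → ℝ}
    (hp : 𝓝 0 ≤ Filter.map (evalMap p) (𝓝 x)) {Q : MvPolynomial τ (MvPolynomial σ ℝ)}
    (hQ : eval p Q = 0) {m : ℕ} (hm : ∀ α, α.degree < m → coeff α Q = 0) {α : τ →₀ ℕ}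
    (hα : α.degree = m) : eval x (coeff α Q) = 0 := by
  suffices h : MvPolynomial.map (eval x) (homogeneousComponent m Q) = 0 by
    simpa [coeff_map, coeff_homogeneousComponent, hα] using congrArg (coeff α) h
  refine MvPolynomial.funext fun v ↦ ?_
  have hle (α) (hα : α ∈ Q.support) : m ≤ α.degree :=
    not_lt.1 fun h ↦ mem_support_iff.1 hα (hm α h)
  -- On the set `p z = s • v`, `Q` evaluated at `p` is `s ^ m * F (z, s)`; at `s = 0` only the form
  -- of degree `m` is left in `F`.
  let F : (σ → ℝ) × ℝ → ℝ := fun zs ↦ ∑ α ∈ Q.support,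
    eval zs.1 (coeff α Q) * zs.2 ^ (α.degree - m) * α.prod fun a n ↦ v a ^ n
  have hF : Continuous F := by
    refine continuous_finsetSum _ fun α _ ↦ ?_
    have := (continuous_eval (coeff α Q)).comp (continuous_fst (X := σ → ℝ) (Y := ℝ))
    fun_prop
  have hFx : eval v (MvPolynomial.map (eval x) (homogeneousComponent m Q)) = F (x, 0) := by
    rw [homogeneousComponent_apply, map_sum, map_sum, Finset.sum_filter]
    refine Finset.sum_congr rfl fun α hα ↦ ?_
    rcases (hle α hα).eq_or_lt with h | h
    · simp [h, eval_monomial]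
    · simp [h.ne', (Nat.sub_pos_of_lt h).ne']
  rw [hFx, map_zero]
  refine (isClosed_eq hF continuous_const).closure_subset_iff.2 ?_ (mem_closure_setOf_eq_smul hp v)
  rintro ⟨z, s⟩ ⟨hs, hz⟩
  have hscale : s ^ m * F (z, s) = eval z (eval p Q) := by
    rw [eval_eq p Q, map_sum, Finset.mul_sum]
    refine Finset.sum_congr rfl fun α hα ↦ ?_
    have hpz (a : τ) : eval z (p a) = s * v a := congrFun hz a
    simp only [map_mul, map_prod, map_pow, hpz, mul_pow, Finset.prod_mul_distrib,
      Finset.prod_pow_eq_pow_sum]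
    rw [← Finsupp.degree_apply, ← pow_mul_pow_sub s (hle α hα), Finsupp.prod]
    ring
  rw [hQ, map_zero] at hscale
  exact (mul_eq_zero.1 hscale).resolve_left (pow_ne_zero m hs)

theorem linearIndependent_mul_prod_pow {p : τ → MvPolynomial σ ℝ} {x : J → σ → ℝ}
    (hp : ∀ j, 𝓝 0 ≤ Filter.map (evalMap p) (𝓝 (x j))) {e : J → MvPolynomial σ ℝ}
    (he : ∀ j, eval (x j) (e j) = 1) (he' : Pairwise fun i j ↦ eval (x i) (e j) = 0) :
    LinearIndependent ℝ fun q : J × (τ →₀ ℕ) ↦ e q.1 * q.2.prod fun a n ↦ p a ^ n := by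
  classical
  refine linearIndependent_iff.2 fun c hc ↦ ?_
  let Q : MvPolynomial τ (MvPolynomial σ ℝ) := c.sum fun q r ↦ monomial q.2 (r • e q.1)
  have hQ : eval p Q = 0 := by
    simp only [Q, ← hc, Finsupp.linearCombination_apply, Finsupp.sum, map_sum, eval_monomial,
      smul_mul_assoc]
  have hcoeff (α : τ →₀ ℕ) :
      coeff α Q = c.sum fun q r ↦ if q.2 = α then r • e q.1 else 0 := by
    simp only [Q, Finsupp.sum, coeff_sum, coeff_monomial]
  have heval (j : J) (α : τ →₀ ℕ) : eval (x j) (coeff α Q) = c (j, α) := by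
    rw [hcoeff, Finsupp.sum, map_sum, Finset.sum_eq_single (j, α)]
    · simp [smul_eval, he]
    · rintro ⟨i, β⟩ - hne
      rcases eq_or_ne β α with rfl | hβ
      · have hij : j ≠ i := fun h ↦ hne (by rw [h])
        simp [smul_eval, he' hij]
      · simp [hβ]
    · intro h
      simp [Finsupp.notMem_support_iff.1 h]
  suffices h : ∀ m (q : J × (τ →₀ ℕ)), q.2.degree = m → c q = 0 from Finsupp.ext fun q ↦ h _ q rfl
  intro m
  induction m using Nat.strong_induction_on with
  | _ m ih =>
    rintro ⟨j, α⟩ hα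
    rw [← heval]
    refine eval_coeff_eq_zero_of_eval_eq_zero (hp j) hQ (fun β hβ ↦ ?_) hα
    rw [hcoeff]
    refine Finset.sum_eq_zero fun q _ ↦ ?_
    dsimp only
    split_ifs with h
    · rw [ih _ hβ q (by rw [h]), zero_smul]
    · rfl

theorem exists_eval_eq_one_and_pairwise_eval_eq_zero {K : Type*} [Field K] [Finite J]
    {x : J → σ → K} (hx : Injective x) :
    ∃ e : J → MvPolynomial σ K,
      (∀ j, eval (x j) (e j) = 1) ∧ Pairwise fun i j ↦ eval (x i) (e j) = 0 := by
  classical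
  cases nonempty_fintype J
  have hsep (i j : J) : ∃ q : MvPolynomial σ K,
      i ≠ j → eval (x i) q = 0 ∧ eval (x j) q = 1 := by
    rcases eq_or_ne i j with rfl | hij
    · exact ⟨0, fun h ↦ (h rfl).elim⟩
    obtain ⟨a, ha⟩ := Function.ne_iff.1 (hx.ne hij.symm)
    exact ⟨C (x j a - x i a)⁻¹ * (X a - C (x i a)), fun _ ↦
      ⟨by simp, by simpa using inv_mul_cancel₀ (sub_ne_zero.2 ha)⟩⟩
  choose q hq using hsep
  refine ⟨fun j ↦ ∏ i ∈ Finset.univ.erase j, q i j, fun j ↦ ?_, fun i j hij ↦ ?_⟩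
  · rw [map_prod]
    exact Finset.prod_eq_one fun i hi ↦ (hq i j (Finset.ne_of_mem_erase hi)).2
  · dsimp only
    rw [map_prod]
    exact Finset.prod_eq_zero (Finset.mem_erase.2 ⟨hij, Finset.mem_univ i⟩) (hq i j hij).1

end Multiplicity

section Bezout

variable {ι J : Type*} [Fintype ι] {κ : ι → Type*} [∀ i, Fintype (κ i)] [Fintype J]

theorem card_mul_choose_le_prod_choose {D : ι → ℕ}
    {p : (Σ i, κ i) → MvPolynomial (Σ i, κ i) ℝ} (hpD : ∀ a, p a ∈ blockDegreeLE ℝ D)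
    {x : J → (Σ i, κ i) → ℝ} (hp : ∀ j, 𝓝 0 ≤ Filter.map (evalMap p) (𝓝 (x j)))
    {e : J → MvPolynomial (Σ i, κ i) ℝ} {E : ι → ℕ} (heE : ∀ j, e j ∈ blockDegreeLE ℝ E)
    (he : ∀ j, eval (x j) (e j) = 1) (he' : Pairwise fun i j ↦ eval (x i) (e j) = 0) (t : ℕ) :
    Fintype.card J * (t + Fintype.card (Σ i, κ i)).choose (Fintype.card (Σ i, κ i)) ≤
      ∏ i, (D i * t + E i + Fintype.card (κ i)).choose (Fintype.card (κ i)) := by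
  set A := {v : (Σ i, κ i) → ℕ // ∑ a, v a ≤ t}
  have hA : Nat.card A = _ := card_sum_le (Σ i, κ i) t
  have : Finite A := Nat.finite_of_card_ne_zero <|
    hA.trans_ne (Nat.choose_pos (Nat.le_add_left _ _)).ne'
  cases nonempty_fintype A
  let exponent (v : A) : (Σ i, κ i) →₀ ℕ := Finsupp.equivFunOnFinite.symm v.1
  have hinj : Injective fun q : J × A ↦ (q.1, exponent q.2) :=
    injective_id.prodMap (Finsupp.equivFunOnFinite.symm.injective.comp Subtype.val_injective)
  have hind := (linearIndependent_mul_prod_pow hp he he').comp _ hinj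
  have hspan : Submodule.span ℝ (range fun q : J × A ↦
      e q.1 * (exponent q.2).prod fun a n ↦ p a ^ n) ≤ blockDegreeLE ℝ (t • D + E) := by
    rw [Submodule.span_le, range_subset_iff]
    intro q
    rw [mul_comm]
    refine mul_mem_blockDegreeLE (blockDegreeLE_mono ?_ (prod_pow_mem_blockDegreeLE hpD _)) (heE _)
    refine nsmul_le_nsmul_left zero_le ?_
    simpa [exponent, Finsupp.degree_eq_sum] using q.2.2
  have hcard := (finrank_span_eq_card hind).symm.trans_le (Submodule.finrank_mono hspan)
  rw [finrank_blockDegreeLE, Fintype.card_prod, ← Nat.card_eq_fintype_card (α := A), hA] at hcard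
  simpa [mul_comm t] using hcard

theorem card_le_of_nhds_zero_le_map_evalMap {D : ι → ℕ}
    {p : (Σ i, κ i) → MvPolynomial (Σ i, κ i) ℝ} (hpD : ∀ a, p a ∈ blockDegreeLE ℝ D)
    {x : J → (Σ i, κ i) → ℝ} (hx : Injective x)
    (hp : ∀ j, 𝓝 0 ≤ Filter.map (evalMap p) (𝓝 (x j))) :
    (Fintype.card J : ℝ) ≤ (Fintype.card (Σ i, κ i))! *
      ∏ i, (D i : ℝ) ^ Fintype.card (κ i) / (Fintype.card (κ i))! := by
  set K := Fintype.card (Σ i, κ i)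
  obtain ⟨e, he, he'⟩ := exists_eval_eq_one_and_pairwise_eval_eq_zero hx
  let s := Finset.univ.sup fun j ↦ (e j).totalDegree
  have hes (j : J) : e j ∈ blockDegreeLE ℝ fun _ ↦ s :=
    mem_blockDegreeLE_of_totalDegree_le fun _ ↦
      Finset.le_sup (f := fun j ↦ (e j).totalDegree) (Finset.mem_univ j)
  have hleft : Tendsto (fun t : ℕ ↦ (Fintype.card J : ℝ) * (((t + K).choose K : ℝ) / t ^ K))
      atTop (𝓝 (Fintype.card J * (1 / K !))) := by
    simpa using (tendsto_choose_div_pow 1 0 K).const_mul (Fintype.card J : ℝ)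
  have hright := tendsto_finsetProd Finset.univ fun i _ ↦
    tendsto_choose_div_pow (D i) s (Fintype.card (κ i))
  have hlim := le_of_tendsto_of_tendsto' hleft hright fun t ↦ ?_
  · rwa [mul_one_div, div_le_iff₀' (by positivity)] at hlim
  · rw [Finset.prod_div_distrib, Finset.prod_pow_eq_pow_sum, ← Fintype.card_sigma, ← mul_div_assoc]
    gcongr
    exact_mod_cast card_mul_choose_le_prod_choose hpD hp hes he he' t

end Bezout

section Components

variable {X : Type*} [TopologicalSpace X]

theorem exists_continuous_surjective_fin_succ {N : ℕ} {f : X → Fin N} (hf : Continuous f)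
    (hsurj : Surjective f) {i : Fin N} (hi : ¬IsPreconnected (f ⁻¹' {i})) :
    ∃ h : X → Fin (N + 1), Continuous h ∧ Surjective h := by
  classical
  contrapose! hi with hno
  refine isPreconnected_of_forall_constant fun g hg x hx y hy ↦ ?_
  by_contra hxy
  wlog hgx : g x = true generalizing x y
  · exact this y hy x hx (Ne.symm hxy) (by grind)
  have hgy : g y = false := by grind
  let A := f ⁻¹' {i} ∩ g ⁻¹' {true}
  have hA : IsClopen A := by
    have hfib : IsClopen (f ⁻¹' {i}) := (isClopen_discrete _).preimage hf
    exact ⟨hg.preimage_isClosed_of_isClosed hfib.1 (isClosed_discrete _),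
      hg.isOpen_inter_preimage hfib.2 (isOpen_discrete _)⟩
  refine hno (fun z ↦ if z ∈ A then Fin.last N else (f z).castSucc) ?_ fun j ↦ ?_
  · exact continuous_const.if (fun z hz ↦ (hA.frontier_eq.subset hz).elim)
      (continuous_of_discreteTopology.comp hf)
  · induction j using Fin.lastCases with
    | last => exact ⟨x, if_pos ⟨hx, hgx⟩⟩
    | cast j =>
      rcases eq_or_ne j i with rfl | hji
      · exact ⟨y, (if_neg fun hyA ↦ by simp [A, hgy] at hyA).trans (congrArg _ hy)⟩
      · obtain ⟨z, rfl⟩ := hsurj j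
        exact ⟨z, if_neg fun hzA ↦ hji hzA.1⟩

theorem exists_continuous_surjective_fin [Nonempty X] {N : ℕ} (hN : 1 ≤ N)
    (hcard : (N : ℕ∞) ≤ ENat.card (ConnectedComponents X)) :
    ∃ f : X → Fin N, Continuous f ∧ Surjective f := by
  induction N, hN using Nat.le_induction with
  | base => exact ⟨fun _ ↦ 0, continuous_const, fun i ↦ ⟨Classical.arbitrary X, by lia⟩⟩
  | succ N _ ih =>
    obtain ⟨f, hf, hsurj⟩ := ih ((Nat.cast_le.2 N.le_succ).trans hcard)
    have hninj : ¬Injective hf.connectedComponentsLift := fun hinj ↦ by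
      have hle := hcard.trans (ENat.card_le_card_of_injective hinj)
      rw [ENat.card_eq_coe_natCard, Nat.card_fin, Nat.cast_le] at hle
      exact hle.not_gt N.lt_succ_self
    rw [Injective] at hninj
    push Not at hninj
    obtain ⟨a, b, hab, hne⟩ := hninj
    obtain ⟨x, rfl⟩ := ConnectedComponents.surjective_coe a
    obtain ⟨y, rfl⟩ := ConnectedComponents.surjective_coe b
    refine exists_continuous_surjective_fin_succ hf hsurj (i := f y) fun hpre ↦ hne ?_
    rw [ConnectedComponents.coe_eq_coe']
    exact hpre.subset_connectedComponent rfl hab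

theorem finite_connectedComponents_and_card_le {B : ℝ}
    (h : ∀ (N : ℕ) (f : X → Fin N), Continuous f → Surjective f → (N : ℝ) ≤ B) :
    Finite (ConnectedComponents X) ∧ (Nat.card (ConnectedComponents X) : ℝ) ≤ B := by
  rcases isEmpty_or_nonempty X with hX | hX
  · have : IsEmpty (ConnectedComponents X) := ConnectedComponents.isEmpty_iff_isEmpty.2 hX
    exact ⟨inferInstance, by
      simpa using h 0 hX.elim (continuous_iff_continuousAt.2 hX.elim) fun i ↦ i.elim0⟩
  have hle {N : ℕ} (hN : 1 ≤ N) (hcard : (N : ℕ∞) ≤ ENat.card (ConnectedComponents X)) :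
      (N : ℝ) ≤ B := by
    obtain ⟨f, hf, hsurj⟩ := exists_continuous_surjective_fin hN hcard
    exact h N f hf hsurj
  have hfin : Finite (ConnectedComponents X) := by
    by_contra hinf
    rw [not_finite_iff_infinite] at hinf
    have := hle (N := ⌊B⌋₊ + 1) (Nat.le_add_left _ _) (by simp [ENat.card_eq_top_of_infinite])
    exact (Nat.lt_floor_add_one B).not_ge (by exact_mod_cast this)
  refine ⟨hfin, hle Nat.card_pos ?_⟩
  rw [ENat.card_eq_coe_natCard]

end Components

section Wells

variable {X : Type*} [TopologicalSpace X]

theorem exists_pairwise_disjoint_isOpen_mem [NormalSpace X] {s : Set X} (hs : IsClosed s)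
    {f : s → ℕ} (hf : Continuous f) :
    ∃ O : ℕ → Set X, (∀ j, IsOpen (O j)) ∧ Pairwise (Disjoint on O) ∧ ∀ z : s, ↑z ∈ O (f z) := by
  obtain ⟨F, hF⟩ := ContinuousMap.exists_restrict_eq hs
    (⟨fun z ↦ (f z : ℝ), continuous_of_discreteTopology.comp hf⟩ : C(s, ℝ))
  refine ⟨fun j ↦ F ⁻¹' Metric.ball j (1 / 2), fun j ↦ Metric.isOpen_ball.preimage F.continuous,
    fun i j hij ↦ (Metric.ball_disjoint_ball ?_).preimage F, fun z ↦ ?_⟩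
  · have := Nat.pairwise_one_le_dist hij
    rw [Nat.dist_cast_real]
    linarith
  · have hz : F z = f z := DFunLike.congr_fun hF z
    simp [hz]

/-- `HasWell h L` says that `h` is smaller at some interior point of `L` than everywhere on the
frontier of `L`. For compact `L` this forces a local minimum inside `L` and, unlike the existence
of a local minimum, it persists under small perturbations of `h`. -/
def HasWell (h : X → ℝ) (L : Set X) : Prop :=
  ∃ p ∈ interior L, ∀ z ∈ frontier L, h p < h z

variable [T2Space X] {L : Set X}

theorem HasWell.exists_isLocalMin {h : X → ℝ} (hw : HasWell h L) (hh : Continuous h)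
    (hL : IsCompact L) : ∃ z ∈ interior L, IsLocalMin h z := by
  obtain ⟨p, hp, hlt⟩ := hw
  rw [hL.isClosed.frontier_eq] at hlt
  exact hL.exists_isLocalMin_mem_open interior_subset hh.continuousOn (interior_subset hp) hlt
    isOpen_interior

theorem HasWell.eventually {B : Type*} [TopologicalSpace B] {h : B → X → ℝ} {b₀ : B}
    (hw : HasWell (h b₀) L) (hh : Continuous ↿h) (hL : IsCompact L) :
    ∀ᶠ b in 𝓝 b₀, HasWell (h b) L := by
  obtain ⟨p, hp, hlt⟩ := hw
  have hfr : IsCompact (frontier L) :=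
    hL.of_isClosed_subset isClosed_frontier hL.isClosed.frontier_subset
  refine (hfr.eventually_forall_of_forall_eventually (P := fun b z ↦ h b p < h b z)
    fun z hz ↦ ?_).mono fun b hb ↦ ⟨p, hp, hb⟩
  have hleft : Continuous fun bz : B × X ↦ h bz.1 p :=
    hh.comp (continuous_fst.prodMk continuous_const)
  exact (isOpen_lt hleft hh).mem_nhds (hlt z hz)

theorem exists_isCompact_eventually_hasWell [LocallyCompactSpace X] {g q : X → ℝ}
    (hg : Continuous g) (hq : Continuous q) (hqc : ∀ c, IsCompact {z | q z ≤ c}) {Z O : Set X}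
    (hZ : IsClosed Z) (hne : Z.Nonempty) (hO : IsOpen O) (hZO : Z ⊆ O) (hgZ : ∀ z ∈ Z, g z = 0)
    (hgO : ∀ z ∈ O \ Z, 0 < g z) :
    ∃ L, IsCompact L ∧ L ⊆ O ∧ ∀ᶠ ε in 𝓝[>] (0 : ℝ), HasWell (fun z ↦ g z + ε * q z) L := by
  obtain ⟨p, hp⟩ := hne
  obtain ⟨L, hL, hKL, hLO⟩ := exists_compact_between ((hqc (q p)).inter_left hZ) hO
    (inter_subset_left.trans hZO)
  have hfr : frontier L ⊆ L \ interior L := hL.isClosed.frontier_eq.subset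
  refine ⟨L, hL, hLO, ?_⟩
  -- On the frontier of `L` either `q p < q z`, or `z` is outside `Z` and `0 < g z`.
  have hlow : ∀ᶠ ε in 𝓝 (0 : ℝ), ∀ z ∈ frontier L ∩ {z | q z ≤ q p}, ε * q p < g z + ε * q z := by
    refine ((hqc (q p)).inter_left isClosed_frontier).eventually_forall_of_forall_eventually
      fun z hz ↦ ?_
    have hzZ : z ∉ Z := fun h ↦ (hfr hz.1).2 (hKL ⟨h, hz.2⟩)
    refine (isOpen_lt (by fun_prop) (by fun_prop)).mem_nhds ?_
    simpa using hgO z ⟨hLO (hfr hz.1).1, hzZ⟩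
  filter_upwards [mem_nhdsWithin_of_mem_nhds hlow, self_mem_nhdsWithin] with ε hε hpos
  refine ⟨p, hKL ⟨hp, le_refl (q p)⟩, fun z hz ↦ ?_⟩
  dsimp only
  rw [hgZ p hp, zero_add]
  rcases le_or_gt (q z) (q p) with hle | hgt
  · exact hε z ⟨hz, hle⟩
  · have hgz : 0 ≤ g z := by
      by_cases hzZ : z ∈ Z
      · exact (hgZ z hzZ).ge
      · exact (hgO z ⟨hLO (hfr hz).1, hzZ⟩).le
    have := mul_lt_mul_of_pos_left hgt hpos
    linarith

theorem exists_pairwise_disjoint_eventually_hasWell [LocallyCompactSpace X] [NormalSpace X]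
    {g q : X → ℝ} (hg : Continuous g) (hg0 : ∀ z, 0 ≤ g z) (hq : Continuous q)
    (hqc : ∀ c, IsCompact {z | q z ≤ c}) {N : ℕ} {f : {z | g z = 0} → Fin N} (hf : Continuous f)
    (hsurj : Surjective f) :
    ∃ L : Fin N → Set X, (∀ j, IsCompact (L j)) ∧ Pairwise (Disjoint on L) ∧
      ∀ᶠ ε in 𝓝[>] (0 : ℝ), ∀ j, HasWell (fun z ↦ g z + ε * q z) (L j) := by
  have hcl : IsClosed {z | g z = 0} := isClosed_eq hg continuous_const
  obtain ⟨O, hO, hdisj, hmem⟩ := exists_pairwise_disjoint_isOpen_mem hcl (f := fun z ↦ f z)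
    (continuous_of_discreteTopology.comp hf)
  have hwell (j : Fin N) : ∃ L, IsCompact L ∧ L ⊆ O j ∧
      ∀ᶠ ε in 𝓝[>] (0 : ℝ), HasWell (fun z ↦ g z + ε * q z) L := by
    refine exists_isCompact_eventually_hasWell hg hq hqc (Z := Subtype.val '' (f ⁻¹' {j}))
      (hcl.isClosedMap_subtype_val _ ((isClosed_discrete _).preimage hf))
      (((singleton_nonempty j).preimage hsurj).image _) (hO j) ?_ ?_ ?_
    · rintro _ ⟨z, rfl, rfl⟩
      exact hmem z
    · rintro _ ⟨z, -, rfl⟩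
      exact z.2
    · rintro z ⟨hzO, hzZ⟩
      refine (hg0 z).lt_of_ne' fun hz ↦ hzZ ⟨⟨z, hz⟩, ?_, rfl⟩
      by_contra hne
      exact disjoint_left.1 (hdisj (Fin.val_ne_of_ne hne)) (hmem ⟨z, hz⟩) hzO
  choose L hL hLO hwell using hwell
  exact ⟨L, hL, fun i j hij ↦ (hdisj (Fin.val_ne_of_ne hij)).mono (hLO i) (hLO j),
    eventually_all.2 hwell⟩

end Wells

section Perturbation

theorem isCompact_setOf_sum_sq_le {σ : Type*} [Fintype σ] (c : ℝ) :
    IsCompact {z : σ → ℝ | ∑ a, z a ^ 2 ≤ c} := by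
  refine (isCompact_univ_pi fun _ ↦ isCompact_Icc (a := -√c) (b := √c)).of_isClosed_subset
    (isClosed_le (by fun_prop) continuous_const) fun z hz a _ ↦ abs_le.1 (Real.abs_le_sqrt ?_)
  exact (Finset.single_le_sum (fun a _ ↦ sq_nonneg (z a)) (Finset.mem_univ a)).trans hz

theorem dense_setOf_nhds_le_map {E : Type*} [NormedAddCommGroup E] [NormedSpace ℝ E]
    [FiniteDimensional ℝ E] {F : E → E} (hF : ContDiff ℝ 1 F) :
    Dense {b | ∀ z, F z = b → 𝓝 b ≤ Filter.map F (𝓝 z)} := by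
  borelize E
  have hnull := MeasureTheory.addHaar_image_eq_zero_of_det_fderivWithin_eq_zero
    (MeasureTheory.Measure.addHaar (G := E)) (s := {z | (fderiv ℝ F z).det = 0})
    (fun z _ ↦ (hF.differentiable one_ne_zero z).hasFDerivAt.hasFDerivWithinAt) fun z hz ↦ hz
  refine (interior_eq_empty_iff_dense_compl.1
    (MeasureTheory.Measure.interior_eq_empty_of_null hnull)).mono ?_
  rintro _ hb z rfl
  have hdet : IsUnit (fderiv ℝ F z).det := isUnit_iff_ne_zero.2 fun h ↦ hb ⟨z, h, rfl⟩
  have hstrict := hF.contDiffAt.hasStrictFDerivAt (x := z) one_ne_zero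
  refine (hstrict.map_nhds_eq_of_surj ?_).ge
  exact (LinearMap.isUnit_iff_range_eq_top _).1 ((LinearMap.isUnit_iff_isUnit_det _).2 hdet)

theorem hasDerivAt_eval_update {σ 𝕜 : Type*} [DecidableEq σ] [NontriviallyNormedField 𝕜]
    (p : MvPolynomial σ 𝕜) (x : σ → 𝕜) (a : σ) :
    HasDerivAt (fun t ↦ eval (Function.update x a t) p) (eval x (pderiv a p)) (x a) := by
  induction p using MvPolynomial.induction_on with
  | C c => simpa using hasDerivAt_const (x a) c
  | add p q hp hq => simpa using hp.fun_add hq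
  | mul_X p b hp =>
    have hX := hasDerivAt_pi.1 (hasDerivAt_update x a (x a)) b
    convert! hp.fun_mul hX using 1
    · simp
    · by_cases hab : b = a <;> simp [hab, pderiv_X, mul_comm, add_comm]

theorem eval_pderiv_eq_zero_of_isLocalMin {σ : Type*} {p : MvPolynomial σ ℝ} {x : σ → ℝ}
    (hx : IsLocalMin (fun z ↦ eval z p) x) (a : σ) : eval x (pderiv a p) = 0 := by
  classical
  have hline : Tendsto (Function.update x a) (𝓝 (x a)) (𝓝 x) := by
    have : Continuous (Function.update x a) := by fun_prop
    simpa using this.tendsto (x a)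
  have hmin : IsLocalMin (fun t ↦ eval (Function.update x a t) p) (x a) := by
    filter_upwards [hline.eventually hx] with t ht
    simpa using ht
  exact hmin.hasDerivAt_eq_zero (hasDerivAt_eval_update p x a)

theorem totalDegree_C_mul_sum_X_sq_sub_le {σ R : Type*} [CommRing R] [Nontrivial R] [Fintype σ]
    (ε : R) (b : σ → R) :
    (C ε * ∑ a, X a ^ 2 - ∑ a, C (b a) * X a : MvPolynomial σ R).totalDegree ≤ 2 := by
  refine (totalDegree_sub _ _).trans (max_le ?_ ?_)
  · refine (totalDegree_mul _ _).trans ?_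
    rw [totalDegree_C, zero_add]
    exact totalDegree_finsetSum_le fun a _ ↦ (totalDegree_X_pow a 2).le
  · refine totalDegree_finsetSum_le fun a _ ↦ (totalDegree_mul _ _).trans ?_
    simp

theorem exists_totalDegree_le_two_nhds_le_map_evalMap_pderiv {σ : Type*} [Finite σ]
    {g : MvPolynomial σ ℝ} (hg : ∀ z, 0 ≤ eval z g) {N : ℕ} {f : {z | eval z g = 0} → Fin N}
    (hf : Continuous f) (hsurj : Surjective f) :
    ∃ u : MvPolynomial σ ℝ, u.totalDegree ≤ 2 ∧ ∃ x : Fin N → σ → ℝ, Injective x ∧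
      ∀ j, 𝓝 0 ≤ Filter.map (evalMap fun a ↦ pderiv a (g + u)) (𝓝 (x j)) := by
  classical
  cases nonempty_fintype σ
  have hq : Continuous fun z : σ → ℝ ↦ ∑ a, z a ^ 2 := by fun_prop
  obtain ⟨L, hL, hdisj, hwell⟩ := exists_pairwise_disjoint_eventually_hasWell (continuous_eval g)
    hg hq isCompact_setOf_sum_sq_le hf hsurj
  obtain ⟨ε, hε⟩ := hwell.exists
  let u (b : σ → ℝ) : MvPolynomial σ ℝ := C ε * ∑ a, X a ^ 2 - ∑ a, C (b a) * X a
  have hu (b z : σ → ℝ) : eval z (g + u b) = eval z g + (ε * ∑ a, z a ^ 2 - ∑ a, b a * z a) := by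
    simp [u]
  let h (b z : σ → ℝ) : ℝ := eval z (g + u b)
  have hh : Continuous ↿h := by
    simp only [h, hu]
    have := (continuous_eval g).comp (continuous_snd (X := σ → ℝ))
    fun_prop
  have h_zero : h 0 = fun z ↦ eval z g + ε * ∑ a, z a ^ 2 := funext fun z ↦ by simp [h, hu]
  have hnear : ∀ᶠ b in 𝓝 0, ∀ j, HasWell (h b) (L j) :=
    eventually_all.2 fun j ↦ HasWell.eventually (h_zero ▸ hε j) hh (hL j)
  let F := evalMap fun a ↦ pderiv a (g + u 0)
  have hF : ContDiff ℝ 1 F := contDiff_pi.2 fun a ↦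
    (AnalyticOnNhd.eval_mvPolynomial (pderiv a (g + u 0))).contDiff
  obtain ⟨b, hreg, hb⟩ := (dense_setOf_nhds_le_map hF).inter_nhds_nonempty hnear
  have hgrad : (evalMap fun a ↦ pderiv a (g + u b)) = (· - b) ∘ F := by
    ext z a
    simp [F, evalMap, u, pderiv_X, Pi.single_apply, apply_ite, add_sub_assoc]
  have hmin (j : Fin N) : ∃ z ∈ interior (L j), IsLocalMin (fun z ↦ eval z (g + u b)) z :=
    (hb j).exists_isLocalMin (continuous_eval _) (hL j)
  choose x hx hmin using hmin
  refine ⟨u b, totalDegree_C_mul_sum_X_sq_sub_le ε b, x, fun i j hij ↦ ?_, fun j ↦ ?_⟩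
  · by_contra hne
    exact disjoint_left.1 (hdisj hne) (interior_subset (hx i)) (hij ▸ interior_subset (hx j))
  · have hcrit : evalMap (fun a ↦ pderiv a (g + u b)) (x j) = 0 :=
      funext (eval_pderiv_eq_zero_of_isLocalMin (hmin j))
    rw [hgrad, comp_apply, sub_eq_zero] at hcrit
    calc
      𝓝 0 = Filter.map (· - b) (𝓝 b) := by simp
      _ ≤ Filter.map (· - b) (Filter.map F (𝓝 (x j))) := Filter.map_mono (hreg _ hcrit)
      _ = Filter.map (evalMap fun a ↦ pderiv a (g + u b)) (𝓝 (x j)) := by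
        rw [Filter.map_map, hgrad]

end Perturbation

section Nonneg

variable {ι : Type*} [Fintype ι] {κ : ι → Type*} [∀ i, Fintype (κ i)]

theorem finite_connectedComponents_and_card_le_of_nonneg {D : ι → ℕ} (hD : ∀ i, 2 ≤ D i)
    {g : MvPolynomial (Σ i, κ i) ℝ} (hgD : g ∈ blockDegreeLE ℝ D) (hg : ∀ z, 0 ≤ eval z g) :
    Finite (ConnectedComponents {z | eval z g = 0}) ∧
      (Nat.card (ConnectedComponents {z | eval z g = 0}) : ℝ) ≤ (Fintype.card (Σ i, κ i))! *
        ∏ i, (D i : ℝ) ^ Fintype.card (κ i) / (Fintype.card (κ i))! := by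
  refine finite_connectedComponents_and_card_le fun N f hf hsurj ↦ ?_
  obtain ⟨u, hu, x, hx, hmap⟩ := exists_totalDegree_le_two_nhds_le_map_evalMap_pderiv hg hf hsurj
  have huD : u ∈ blockDegreeLE ℝ D :=
    mem_blockDegreeLE_of_totalDegree_le fun i ↦ hu.trans (hD i)
  simpa using card_le_of_nhds_zero_le_map_evalMap
    (fun a ↦ pderiv_mem_blockDegreeLE (add_mem hgD huD) a) hx hmap

theorem prod_two_mul_pow_div_factorial (d : ι → ℕ) :
    ∏ i, ((2 * d i : ℕ) : ℝ) ^ Fintype.card (κ i) / (Fintype.card (κ i))! =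
      2 ^ Fintype.card (Σ i, κ i) *
        ∏ i, (d i : ℝ) ^ Fintype.card (κ i) / (Fintype.card (κ i))! := by
  simp [mul_pow, mul_div_assoc, Finset.prod_mul_distrib, Finset.prod_pow_eq_pow_sum]

end Nonneg

end Rojas

open Rojas in
theorem blockwise_rojas_bound_general {ι J : Type*} [Fintype ι] {κ : ι → Type*}
    [∀ i, Fintype (κ i)] [Finite J] {d : ι → ℕ} (hd : ∀ i, 1 ≤ d i)
    {θ : J → MvPolynomial (Σ i, κ i) ℝ} (hθ : ∀ j, θ j ∈ blockDegreeLE ℝ d) (y : J → ℝ) :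
    Finite (ConnectedComponents (evalMap θ ⁻¹' {y})) ∧
      (Nat.card (ConnectedComponents (evalMap θ ⁻¹' {y})) : ℝ) ≤
        2 ^ Fintype.card (Σ i, κ i) * (Fintype.card (Σ i, κ i)).factorial *
          ∏ i, (d i : ℝ) ^ Fintype.card (κ i) / (Fintype.card (κ i)).factorial := by
  cases nonempty_fintype J
  let g : MvPolynomial (Σ i, κ i) ℝ :=
    ∑ j, (θ j - MvPolynomial.C (y j)) * (θ j - MvPolynomial.C (y j))
  have hgd : g ∈ blockDegreeLE ℝ (d + d) := sum_mem fun j _ ↦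
    have h := sub_mem (hθ j) (C_mem_blockDegreeLE d (y j))
    mul_mem_blockDegreeLE h h
  have hzero : evalMap θ ⁻¹' {y} = {z | MvPolynomial.eval z g = 0} := by
    ext z
    simp [g, evalMap, funext_iff, sub_eq_zero,
      Finset.sum_eq_zero_iff_of_nonneg fun j _ ↦ mul_self_nonneg (MvPolynomial.eval z (θ j) - y j)]
  have hbound := finite_connectedComponents_and_card_le_of_nonneg
    (fun i ↦ add_le_add (hd i) (hd i)) hgd fun z ↦ by
      simpa [g] using Finset.sum_nonneg fun j _ ↦ mul_self_nonneg (MvPolynomial.eval z (θ j) - y j)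
  simp only [← two_mul, prod_two_mul_pow_div_factorial] at hbound
  rwa [← hzero, ← mul_assoc, mul_comm (_ : ℝ) (2 ^ _)] at hbound

/-- With the `k = Σ kᵢ` variables partitioned into `l` blocks of sizes `kᵢ`
(indexed by the sigma type `(i : Fin l) × Fin (k i)`), if every monomial of every `θ_j`
has total degree at most `dᵢ` in the variables of block `i`, and `y` is a regular value
of `f = (θ₁,…,θ_r)`, then `f⁻¹(y)` has at most `2^k · k! · ∏ᵢ dᵢ^{kᵢ}/kᵢ!` connected
components. -/
theorem blockwise_rojas_bound
    (l : ℕ) (hl : 1 ≤ l) (k : Fin l → ℕ) (hk : ∀ i, 1 ≤ k i)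
    (d : Fin l → ℕ) (hd : ∀ i, 1 ≤ d i)
    (K : ℕ) (hK : K = ∑ i, k i) (r : ℕ)
    (θ : Fin r → MvPolynomial ((i : Fin l) × Fin (k i)) ℝ)
    (hdeg : ∀ j, ∀ m ∈ (θ j).support, ∀ i : Fin l,
      ∑ t : Fin (k i), m ⟨i, t⟩ ≤ d i)
    (f : (((i : Fin l) × Fin (k i)) → ℝ) → (Fin r → ℝ))
    (hf : ∀ w j, f w j = MvPolynomial.eval w (θ j))
    (y : Fin r → ℝ)
    (hreg : ∀ x ∈ f ⁻¹' {y}, Function.Surjective (fderiv ℝ f x)) :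
    Finite (ConnectedComponents ↥(f ⁻¹' {y})) ∧
      (Nat.card (ConnectedComponents ↥(f ⁻¹' {y})) : ℝ) ≤
        2 ^ K * (Nat.factorial K : ℝ) *
          ∏ i, (d i : ℝ) ^ (k i) / (Nat.factorial (k i) : ℝ) := by
  subst hK
  obtain rfl : f = Rojas.evalMap θ := funext fun w ↦ funext (hf w)
  simpa using blockwise_rojas_bound_general hd hdeg y
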